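/- Let R be a finite subgroup of O(3) with R not contained in SO(3), and suppose pr(R) is conjugate in O(3) to D_n. If n is odd, then R is conjugate in O(3) to D_n × Z or to ⟨a_n, −b⟩. If n is even, then R is conjugate in O(3) to one of the four groups D_n × Z, ⟨a_n, −b⟩, ⟨−a_n, b⟩, ⟨−a_n, −b⟩. -/

import Mathlib

/-! After conjugating, assume `pr(R) = D_n`, so that for every `g ∈ D_n` at least one of `±g` lies
in `R`, and every element of `R` is, up to sign, in `D_n`. If `-1 ∈ R`, this gives `R = D_n × Z`.
If `-1 ∉ R`, exactly one of `±g` lies in `R` for each `g ∈ D_n`; taking `x = ±a_n` and `y = ±b` to be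
the signed generators lying in `R`, a word in `a_n, b` agrees up to sign with the same word in `x, y`,
and hence `R = ⟨x, y⟩` (`eq_gen_of_neg_one_notMem`). The choice `(a_n, b)` would put `R` inside
`SO(3)`, and for odd `n` the choice `x = -a_n` is impossible because `(-a_n)^n = -1`. -/

/-! Setup: `O(3)` is the group of 3×3 real orthogonal matrices, `SO(3)` the subgroup of
determinant-one matrices, and `pr : O(3) → SO(3)`, `A ↦ det A · A` (kernel `Z = {±1}`).
Subgroups of `O(3)` are modelled as subsets of the matrix ring that contain `1`, are
closed under multiplication and under transpose (which is the inverse in `O(3)`). -/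

noncomputable section
open Matrix

abbrev M3 : Type := Matrix (Fin 3) (Fin 3) ℝ

/-- The set of orthogonal 3×3 real matrices. -/
def O3 : Set M3 := {A : M3 | A * Aᵀ = 1 ∧ Aᵀ * A = 1}

/-- The set of special orthogonal 3×3 real matrices. -/
def SO3 : Set M3 := {A : M3 | A ∈ O3 ∧ A.det = 1}

/-- `R` is a subgroup of `O(3)` (inverses in `O(3)` are transposes). -/
structure IsSubgroupO3 (R : Set M3) : Prop where
  subset_O3 : R ⊆ O3
  one_mem : (1 : M3) ∈ R
  mul_mem : ∀ ⦃A B : M3⦄, A ∈ R → B ∈ R → A * B ∈ R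
  transpose_mem : ∀ ⦃A : M3⦄, A ∈ R → Aᵀ ∈ R

/-- The homomorphism `pr : O(3) → SO(3)`, `A ↦ det A • A`. -/
def pr (A : M3) : M3 := A.det • A

/-- The image `pr(R)`. -/
def prS (R : Set M3) : Set M3 := pr '' R

/-- Two subsets of `O(3)` are conjugate in `O(3)`. -/
def ConjO3 (R S : Set M3) : Prop := ∃ P ∈ O3, S = (fun A => P * A * Pᵀ) '' R

/-- The subgroup of `O(3)` generated by a subset.  (For subsets of `O(3)` that are closed
under inverses -- in particular finite-order generators or inverse-closed sets -- the
submonoid closure coincides with the generated subgroup.) -/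
def gen (S : Set M3) : Set M3 := (Submonoid.closure S : Set M3)

/-- `K × Z = {±g : g ∈ K}`, the internal direct product with the center `Z = {1, -1}`. -/
def prodZ (K : Set M3) : Set M3 := K ∪ (fun A : M3 => -A) '' K

/-- The rotation through angle `θ` around the `z`-axis. -/
def rotZ (θ : ℝ) : M3 :=
  !![Real.cos θ, -Real.sin θ, 0; Real.sin θ, Real.cos θ, 0; 0, 0, 1]

/-- `a_n`: the rotation through `2π/n` around the `z`-axis. -/
def aRot (n : ℕ) : M3 := rotZ (2 * Real.pi / n)

/-- `b`: the rotation through `π` around the `x`-axis. -/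
def bRot : M3 := !![1, 0, 0; 0, -1, 0; 0, 0, -1]

/-- `Z_n = ⟨a_n⟩`. -/
def cyclicZ (n : ℕ) : Set M3 := gen {aRot n}

/-- `D_n = ⟨a_n, b⟩`. -/
def dihedralD (n : ℕ) : Set M3 := gen {aRot n, bRot}

lemma det_eq_of_mem_O3 {A : M3} (hA : A ∈ O3) : A.det = 1 ∨ A.det = -1 := by
  have h := congrArg Matrix.det hA.1
  rw [Matrix.det_mul, Matrix.det_transpose, Matrix.det_one] at h
  exact mul_self_eq_one_iff.mp h

lemma pr_eq_or {A : M3} (hA : A ∈ O3) : pr A = A ∨ pr A = -A := by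
  rcases det_eq_of_mem_O3 hA with h | h <;> simp [pr, h]

lemma conj_isSubgroup {R : Set M3} (hR : IsSubgroupO3 R) {P : M3} (hP : P ∈ O3) :
    IsSubgroupO3 ((fun A => P * A * Pᵀ) '' R) where
  subset_O3 := by
    rintro _ ⟨A, hA, rfl⟩
    obtain ⟨h1, h2⟩ := hR.subset_O3 hA
    constructor
    · calc P * A * Pᵀ * (P * A * Pᵀ)ᵀ = P * (A * (Pᵀ * P) * Aᵀ) * Pᵀ := by
            simp [Matrix.transpose_mul, Matrix.mul_assoc]
        _ = 1 := by simp [hP.1, hP.2, h1]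
    · calc (P * A * Pᵀ)ᵀ * (P * A * Pᵀ) = P * (Aᵀ * (Pᵀ * P) * A) * Pᵀ := by
            simp [Matrix.transpose_mul, Matrix.mul_assoc]
        _ = 1 := by simp [hP.1, hP.2, h2]
  one_mem := ⟨1, hR.one_mem, by simp [hP.1]⟩
  mul_mem := by
    rintro _ _ ⟨A, hA, rfl⟩ ⟨B, hB, rfl⟩
    refine ⟨A * B, hR.mul_mem hA hB, ?_⟩
    calc P * (A * B) * Pᵀ = P * A * 1 * (B * Pᵀ) := by simp [Matrix.mul_assoc]
      _ = P * A * Pᵀ * (P * B * Pᵀ) := by rw [← hP.2]; simp only [Matrix.mul_assoc]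
  transpose_mem := by
    rintro _ ⟨A, hA, rfl⟩
    exact ⟨Aᵀ, hR.transpose_mem hA, by simp [Matrix.transpose_mul, Matrix.mul_assoc]⟩

lemma det_conj {P : M3} (hP : P ∈ O3) (A : M3) : (P * A * Pᵀ).det = A.det := by
  have h := congrArg Matrix.det hP.1
  rw [Matrix.det_mul, Matrix.det_one] at h
  rw [Matrix.det_mul, Matrix.det_mul, mul_right_comm, h, one_mul]

lemma prS_conj (R : Set M3) {P : M3} (hP : P ∈ O3) :
    prS ((fun A => P * A * Pᵀ) '' R) = (fun A => P * A * Pᵀ) '' prS R := by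
  simp only [prS, Set.image_image]
  refine Set.image_congr fun A _ => ?_
  simp only [pr, det_conj hP, Matrix.mul_smul, Matrix.smul_mul]

lemma mem_or_neg_mem_of_mem_prS {R : Set M3} (hR : IsSubgroupO3 R) {g : M3} (hg : g ∈ prS R) :
    g ∈ R ∨ -g ∈ R := by
  obtain ⟨r, hr, rfl⟩ := hg
  rcases pr_eq_or (hR.subset_O3 hr) with h | h <;> simp [h, hr]

lemma mem_prS_or_neg_mem_prS {R : Set M3} (hR : IsSubgroupO3 R) {r : M3} (hr : r ∈ R) :
    r ∈ prS R ∨ -r ∈ prS R := by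
  have hmem : pr r ∈ prS R := ⟨r, hr, rfl⟩
  rcases pr_eq_or (hR.subset_O3 hr) with h | h
  · exact .inl (h ▸ hmem)
  · exact .inr (h ▸ hmem)

lemma neg_mem_of_neg_one_mem {R : Set M3} (hR : IsSubgroupO3 R) (h : (-1 : M3) ∈ R) {r : M3}
    (hr : r ∈ R) : -r ∈ R := by
  simpa using hR.mul_mem h hr

lemma eq_prodZ_of_neg_one_mem {R : Set M3} (hR : IsSubgroupO3 R) (h : (-1 : M3) ∈ R) :
    R = prodZ (prS R) := by
  ext r
  constructor
  · intro hr
    rcases mem_prS_or_neg_mem_prS hR hr with h' | h'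
    · exact .inl h'
    · exact .inr ⟨-r, h', neg_neg r⟩
  · have key : ∀ g ∈ prS R, g ∈ R := fun g hg =>
      (mem_or_neg_mem_of_mem_prS hR hg).elim id fun h' => by
        simpa using neg_mem_of_neg_one_mem hR h h'
    rintro (hr | ⟨g, hg, rfl⟩)
    · exact key r hr
    · exact neg_mem_of_neg_one_mem hR h (key g hg)

lemma gen_subset {R : Set M3} (hR : IsSubgroupO3 R) {S : Set M3} (hS : S ⊆ R) : gen S ⊆ R := by
  let N : Submonoid M3 :=
    { carrier := R
      one_mem' := hR.one_mem
      mul_mem' := fun ha hb => hR.mul_mem ha hb }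
  exact (Submonoid.closure_le (S := N)).mpr hS

/-- Changing the signs of the generators changes the elements they generate by at most a sign. -/
lemma mem_gen_or_neg_mem_gen {a b x y : M3} (hx : x = a ∨ x = -a) (hy : y = b ∨ y = -b) {g : M3}
    (hg : g ∈ gen {a, b}) : g ∈ gen {x, y} ∨ -g ∈ gen {x, y} := by
  have hxg : x ∈ Submonoid.closure {x, y} := Submonoid.subset_closure (by simp)
  have hyg : y ∈ Submonoid.closure {x, y} := Submonoid.subset_closure (by simp)
  simp only [gen, SetLike.mem_coe] at hg ⊢
  induction hg using Submonoid.closure_induction with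
  | mem g hg =>
    rcases hg with rfl | rfl
    · rcases hx with h | h
      · exact .inl (h ▸ hxg)
      · exact .inr (h ▸ hxg)
    · rcases hy with h | h
      · exact .inl (h ▸ hyg)
      · exact .inr (h ▸ hyg)
  | one => exact .inl (one_mem _)
  | mul g k _ _ ihg ihk =>
    rcases ihg with h | h <;> rcases ihk with h' | h'
    · exact .inl (mul_mem h h')
    · exact .inr (by simpa using mul_mem h h')
    · exact .inr (by simpa using mul_mem h h')
    · exact .inl (by simpa using mul_mem h h')

/-- If `-1 ∉ R`, then `R` is generated by any sign-lifts in `R` of generators of `pr(R)`. -/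
lemma eq_gen_of_neg_one_notMem {R : Set M3} (hR : IsSubgroupO3 R) (hneg : (-1 : M3) ∉ R)
    {a b x y : M3} (hab : prS R = gen {a, b}) (hxR : x ∈ R) (hyR : y ∈ R)
    (hx : x = a ∨ x = -a) (hy : y = b ∨ y = -b) : R = gen {x, y} := by
  have hsub : gen {x, y} ⊆ R := gen_subset hR (by rintro _ (rfl | rfl) <;> assumption)
  refine Set.Subset.antisymm (fun r hr => ?_) hsub
  have hor : r ∈ gen {x, y} ∨ -r ∈ gen {x, y} := by
    rcases mem_prS_or_neg_mem_prS hR hr with h | h <;> rw [hab] at h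
    · exact mem_gen_or_neg_mem_gen hx hy h
    · simpa [or_comm] using mem_gen_or_neg_mem_gen hx hy h
  refine hor.resolve_right fun h => hneg ?_
  -- `r` and `-r` cannot both lie in `R`, since `rᵀ * (-r) = -1`.
  simpa [(hR.subset_O3 hr).2] using hR.mul_mem (hR.transpose_mem hr) (hsub h)

lemma rotZ_mul (s t : ℝ) : rotZ s * rotZ t = rotZ (s + t) := by
  ext i j
  fin_cases i <;> fin_cases j <;>
    simp [rotZ, Matrix.mul_apply, Fin.sum_univ_three, Real.cos_add, Real.sin_add] <;> ring

lemma rotZ_zero : rotZ 0 = 1 := by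
  ext i j
  fin_cases i <;> fin_cases j <;> simp [rotZ]

lemma rotZ_pow (t : ℝ) (k : ℕ) : rotZ t ^ k = rotZ (k * t) := by
  induction k with
  | zero => simp [rotZ_zero]
  | succ k ih => rw [pow_succ, ih, rotZ_mul]; congr 1; push_cast; ring

lemma aRot_pow {n : ℕ} (hn : 0 < n) : aRot n ^ n = 1 := by
  have hn' : (n : ℝ) ≠ 0 := by positivity
  rw [aRot, rotZ_pow, mul_div_cancel₀ _ hn']
  ext i j
  fin_cases i <;> fin_cases j <;> simp [rotZ]

lemma IsSubgroupO3.pow_mem {R : Set M3} (hR : IsSubgroupO3 R) {x : M3} (hx : x ∈ R) (k : ℕ) :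
    x ^ k ∈ R := by
  induction k with
  | zero => simpa using hR.one_mem
  | succ k ih => rw [pow_succ]; exact hR.mul_mem ih hx

lemma det_pr {A : M3} (hA : A ∈ O3) : (pr A).det = 1 := by
  rcases det_eq_of_mem_O3 hA with h | h <;> norm_num [pr, h, Matrix.det_neg]

/-- Let `R` be a finite subgroup of `O(3)` not contained in `SO(3)`,
and suppose `pr(R)` is conjugate in `O(3)` to `D_n`.  If `n` is odd then `R` is conjugate
in `O(3)` to `D_n × Z` or to `⟨a_n, -b⟩`; if `n` is even then `R` is conjugate in `O(3)`
to one of `D_n × Z`, `⟨a_n, -b⟩`, `⟨-a_n, b⟩`, `⟨-a_n, -b⟩`. -/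
theorem statement2 (R : Set M3) (hR : IsSubgroupO3 R) (hfin : R.Finite)
    (hnotrot : ¬ R ⊆ SO3) (n : ℕ) (hn : 0 < n)
    (hconj : ConjO3 (prS R) (dihedralD n)) :
    (Odd n →
      ConjO3 R (prodZ (dihedralD n)) ∨ ConjO3 R (gen {aRot n, -bRot})) ∧
    (Even n →
      ConjO3 R (prodZ (dihedralD n)) ∨ ConjO3 R (gen {aRot n, -bRot}) ∨
      ConjO3 R (gen {-(aRot n), bRot}) ∨ ConjO3 R (gen {-(aRot n), -bRot})) := by
  obtain ⟨P, hP, hD⟩ := hconj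
  have hR' := conj_isSubgroup hR hP
  rw [← prS_conj R hP] at hD
  have hnot' : ¬ (fun A => P * A * Pᵀ) '' R ⊆ SO3 := fun h => hnotrot fun A hA =>
    ⟨hR.subset_O3 hA, by rw [← det_conj hP A]; exact (h ⟨A, hA, rfl⟩).2⟩
  -- It suffices to identify the conjugate `Q` of `R`, for which `pr(Q) = D_n`.
  suffices H : ∀ Q : Set M3, IsSubgroupO3 Q → ¬ Q ⊆ SO3 → prS Q = dihedralD n →
      Q = prodZ (dihedralD n) ∨ Q = gen {aRot n, -bRot} ∨
        (Even n ∧ (Q = gen {-(aRot n), bRot} ∨ Q = gen {-(aRot n), -bRot})) by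
    have conj : ∀ {S : Set M3}, (fun A => P * A * Pᵀ) '' R = S → ConjO3 R S :=
      fun h => ⟨P, hP, h.symm⟩
    rcases H _ hR' hnot' hD.symm with h | h | ⟨he, h | h⟩
    · exact ⟨fun _ => .inl (conj h), fun _ => .inl (conj h)⟩
    · exact ⟨fun _ => .inr (conj h), fun _ => .inr (.inl (conj h))⟩
    · exact ⟨fun ho => absurd he (Nat.not_even_iff_odd.mpr ho),
        fun _ => .inr (.inr (.inl (conj h)))⟩
    · exact ⟨fun ho => absurd he (Nat.not_even_iff_odd.mpr ho),
        fun _ => .inr (.inr (.inr (conj h)))⟩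
  intro Q hQ hnot hpr
  by_cases hneg : (-1 : M3) ∈ Q
  · exact .inl (hpr ▸ eq_prodZ_of_neg_one_mem hQ hneg)
  have heven : -(aRot n) ∈ Q → Even n := fun h => by
    by_contra hodd
    have hpow := hQ.pow_mem h n
    rw [(Nat.not_even_iff_odd.mp hodd).neg_pow, aRot_pow hn] at hpow
    exact hneg hpow
  have ha : aRot n ∈ prS Q := hpr ▸ Submonoid.subset_closure (by simp)
  have hb : bRot ∈ prS Q := hpr ▸ Submonoid.subset_closure (by simp)
  rcases mem_or_neg_mem_of_mem_prS hQ ha with hx | hx <;>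
    rcases mem_or_neg_mem_of_mem_prS hQ hb with hy | hy
  · -- Here `Q = D_n = pr(Q)`, which lies in `SO(3)`.
    have hQD : Q = prS Q :=
      (eq_gen_of_neg_one_notMem hQ hneg hpr hx hy (.inl rfl) (.inl rfl)).trans hpr.symm
    refine absurd (fun r hr => ⟨hQ.subset_O3 hr, ?_⟩) hnot
    rw [hQD] at hr
    obtain ⟨s, hs, rfl⟩ := hr
    exact det_pr (hQ.subset_O3 hs)
  · exact .inr (.inl (eq_gen_of_neg_one_notMem hQ hneg hpr hx hy (.inl rfl) (.inr rfl)))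
  · exact .inr (.inr ⟨heven hx,
      .inl (eq_gen_of_neg_one_notMem hQ hneg hpr hx hy (.inr rfl) (.inl rfl))⟩)
  · exact .inr (.inr ⟨heven hx,
      .inr (eq_gen_of_neg_one_notMem hQ hneg hpr hx hy (.inr rfl) (.inr rfl))⟩)
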